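/- Let R₀ > 0, let E₀ > 0, and let V : ℝ² → ℝ be bounded and measurable with ω_V(θ) > 0 for every θ ∈ (0,1]. There exist a positive function 𝜙 ∈ C^∞(ℝ², ℝ), and constants h₀ > 0, θ₀ ∈ (0,1] and C > 0, such that for all h ∈ (0,h₀], θ ∈ (0,θ₀], E ∈ [−E₀,E₀] and u ∈ C_c^∞(B(0,R₀), ℂ): h ∫_{B(0,R₀)} e^{2𝜙(x) ω_V(θ)^{1/2}/(h θ^{1/2})} (|u(x)|² + (θ/ω_V(θ)) |h∇u(x)|²) dx ≤ C (θ/ω_V(θ))^{3/2} ∫_{B(0,R₀)} e^{2𝜙(x) ω_V(θ)^{1/2}/(h θ^{1/2})} |(−h²Δ + Ṽ_θ − E)u(x)|² dx. -/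

import Mathlib

open MeasureTheory Metric Set

noncomputable section

abbrev E2 := EuclideanSpace ℝ (Fin 2)

/-- The `i`-th standard basis vector of ℝ². -/
def basis2 (i : Fin 2) : E2 := EuclideanSpace.single i (1 : ℝ)

/-- Laplacian of a complex-valued function on ℝ². -/
def lapC (u : E2 → ℂ) (x : E2) : ℂ :=
  ∑ i, fderiv ℝ (fun y => fderiv ℝ u y (basis2 i)) x (basis2 i)

/-- Squared Euclidean norm of the gradient of a complex-valued function. -/
def gradSq (u : E2 → ℂ) (x : E2) : ℝ := ∑ i, ‖fderiv ℝ u x (basis2 i)‖ ^ 2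

/-- The modulus of continuity of `V` over the ball `B(0,R₀)`. -/
def omegaV (R₀ : ℝ) (V : E2 → ℝ) (θ : ℝ) : ℝ :=
  sSup {a : ℝ | ∃ x₀ ∈ ball (0 : E2) R₀, ∃ t ∈ closedBall (0 : E2) θ,
    a = |V (x₀ - t) - V x₀|}

/-- The regularized potential `Ṽ_θ(x) = θ⁻² ∫ V(x - t) φ(t/θ) dt`. -/
def Vreg (V φ : E2 → ℝ) (θ : ℝ) (x : E2) : ℝ :=
  (1 / θ ^ 2) * ∫ t : E2, V (x - t) * φ (θ⁻¹ • t)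

/-- The semiclassical Schrödinger operator `(−h²Δ + W − E)u`. -/
def schrod (h : ℝ) (W : E2 → ℝ) (Eev : ℝ) (u : E2 → ℂ) (x : E2) : ℂ :=
  -(h ^ 2 : ℂ) * lapC u x + ((W x - Eev : ℝ) : ℂ) * u x

/-!
Conjugating `P = -ε²Δ + W` by the weight `e^{ϕ/ε}`, `ϕ = s|x - c|²/2 + 1`, produces
`A + 2εs D`, where `A = -ε²Δ + W - s²|x - c|²` is symmetric and the skew part is a multiple of the
generator `D = (x - c)·∇ + d/2` of dilations about `c`. Since `‖Av + 2εsDv‖² ≥ 8εs ⟨Av, Dv⟩`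
pointwise, the weighted norm of `Pu` controls a virial integral:
`∫⟨Av, Dv⟩ = ∫ (ε²|∇v|² + (s²|x - c|² - (x - c)·∇W/2)|v|²)`.
It is coercive as soon as `s²|x - c|²` dominates the radial force `(x - c)·∇W`, which is arranged
by taking `c` at distance at least `1` from the domain and `s` large.

The derivative of a mollifier has integral zero, so the gradient of `V` mollified at scale `θ` is
`O(ω/θ)`. Multiplying the operator by `q = θ/ω` makes this gradient bounded and replaces `h` by
`ε = h√q`; dividing `q²` by `√q` gives the power `3/2`.
-/

open Module
open scoped Convolution InnerProductSpace Laplacian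

lemma integrable_of_eq_zero_of_notMem_tsupport {X G : Type*} [TopologicalSpace X]
    [MeasurableSpace X] [OpensMeasurableSpace X] {μ : Measure X} [IsFiniteMeasureOnCompacts μ]
    [Zero G] {u : X → G} (hu : HasCompactSupport u) {g : X → ℝ} (hg : Continuous g)
    (hzero : ∀ x ∉ tsupport u, g x = 0) : Integrable g μ :=
  hg.integrable_of_hasCompactSupport (hu.mono' fun x hx ↦ by
    contrapose! hx
    exact Function.notMem_support.2 (hzero x hx))

section Derivatives

variable {F G : Type*} [NormedAddCommGroup F] [NormedSpace ℝ F] [NormedAddCommGroup G]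
  [NormedSpace ℝ G] {u : F → G}

lemma contDiff_one_fderiv_apply (hu : ContDiff ℝ 2 u) (e : F) :
    ContDiff ℝ 1 (fun x ↦ fderiv ℝ u x e) :=
  (hu.fderiv_right le_rfl).clm_apply contDiff_const

lemma continuous_fderiv_apply (hu : ContDiff ℝ 1 u) (e : F) :
    Continuous (fun x ↦ fderiv ℝ u x e) :=
  (hu.continuous_fderiv one_ne_zero).clm_apply continuous_const

lemma continuous_fderiv_apply_sub (hu : ContDiff ℝ 1 u) (c : F) :
    Continuous (fun x ↦ fderiv ℝ u x (x - c)) :=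
  (hu.continuous_fderiv one_ne_zero).clm_apply (continuous_id.sub continuous_const)

lemma fderiv_fderiv_apply (hu : ContDiff ℝ 2 u) (x e f : F) :
    fderiv ℝ (fun y ↦ fderiv ℝ u y e) x f = fderiv ℝ (fderiv ℝ u) x f e := by
  have hdiff : DifferentiableAt ℝ (fderiv ℝ u) x :=
    (hu.fderiv_right (m := 1) le_rfl).differentiable one_ne_zero x
  simp [fderiv_clm_apply hdiff (differentiableAt_const e)]

/-- The generator `(x - c) · ∇ + d / 2` of the unitary dilations of `L²` about the point `c`, where
`d` is the dimension. -/
def dilationGenerator (c : F) (u : F → G) (x : F) : G :=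
  fderiv ℝ u x (x - c) + (finrank ℝ F / 2 : ℝ) • u x

lemma continuous_dilationGenerator (hu : ContDiff ℝ 1 u) (c : F) :
    Continuous (dilationGenerator c u) :=
  (continuous_fderiv_apply_sub hu c).add (hu.continuous.const_smul _)

lemma contDiff_dilationGenerator (hu : ContDiff ℝ 2 u) (c : F) :
    ContDiff ℝ 1 (dilationGenerator c u) := by
  have hu₁ : ContDiff ℝ 1 u := hu.of_le one_le_two
  exact ((hu.fderiv_right le_rfl).clm_apply (by fun_prop)).add (by fun_prop)

lemma fderiv_dilationGenerator (hu : ContDiff ℝ 2 u) (c x e : F) :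
    fderiv ℝ (dilationGenerator c u) x e =
      fderiv ℝ u x e + dilationGenerator c (fun y ↦ fderiv ℝ u y e) x := by
  have hdu : HasFDerivAt (fderiv ℝ u) (fderiv ℝ (fderiv ℝ u) x) x :=
    ((hu.fderiv_right (m := 1) le_rfl).differentiable one_ne_zero x).hasFDerivAt
  have hsub : HasFDerivAt (fun y ↦ y - c) (ContinuousLinearMap.id ℝ F) x :=
    (hasFDerivAt_id x).sub_const c
  have hder : HasFDerivAt (dilationGenerator c u) _ x := (hdu.clm_apply hsub).add
    ((hu.differentiable two_ne_zero x).hasFDerivAt.const_smul (finrank ℝ F / 2 : ℝ))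
  have hsymm : fderiv ℝ (fderiv ℝ u) x e (x - c) = fderiv ℝ (fderiv ℝ u) x (x - c) e :=
    hu.contDiffAt.isSymmSndFDerivAt (by simp) e (x - c)
  rw [hder.fderiv, dilationGenerator, fderiv_fderiv_apply hu, ← hsymm]
  simp only [add_apply, ContinuousLinearMap.comp_apply, ContinuousLinearMap.id_apply,
    ContinuousLinearMap.flip_apply, smul_apply, add_assoc]

lemma dilationGenerator_eq_zero_of_notMem_tsupport (c : F) {x : F} (hx : x ∉ tsupport u) :
    dilationGenerator c u x = 0 := by
  simp [dilationGenerator, fderiv_of_notMem_tsupport ℝ hx, image_eq_zero_of_notMem_tsupport hx]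

end Derivatives

section GradientAndLaplacian

variable {F G ι : Type*} [NormedAddCommGroup F] [InnerProductSpace ℝ F]
  [NormedAddCommGroup G] [InnerProductSpace ℝ G] [Fintype ι] {u : F → G}

/-- The squared Hilbert–Schmidt norm `|∇u|²` of the derivative of `u` at `x`, computed in the
orthonormal basis `b`. -/
def gradNormSq (b : OrthonormalBasis ι ℝ F) (u : F → G) (x : F) : ℝ :=
  ∑ i, ‖fderiv ℝ u x (b i)‖ ^ 2

lemma contDiff_gradNormSq (b : OrthonormalBasis ι ℝ F) (hu : ContDiff ℝ 2 u) :
    ContDiff ℝ 1 (gradNormSq b u) :=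
  ContDiff.sum fun i _ ↦ (contDiff_one_fderiv_apply hu (b i)).norm_sq ℝ

lemma gradNormSq_eq_zero_of_notMem_tsupport (b : OrthonormalBasis ι ℝ F) {x : F}
    (hx : x ∉ tsupport u) : gradNormSq b u x = 0 := by
  simp [gradNormSq, fderiv_of_notMem_tsupport ℝ hx]

lemma two_mul_inner_dilationGenerator {x : F} (hu : DifferentiableAt ℝ u x) (c : F) :
    2 * ⟪u x, dilationGenerator c u x⟫_ℝ =
      fderiv ℝ (fun y ↦ ‖u y‖ ^ 2) x (x - c) + finrank ℝ F * ‖u x‖ ^ 2 := by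
  rw [hu.hasFDerivAt.norm_sq.fderiv, dilationGenerator, inner_add_right, real_inner_smul_right,
    real_inner_self_eq_norm_sq]
  simp only [smul_apply, ContinuousLinearMap.comp_apply, innerSL_apply_apply, nsmul_eq_mul,
    Nat.cast_ofNat]
  ring

lemma fderiv_gradNormSq_add (b : OrthonormalBasis ι ℝ F) (hu : ContDiff ℝ 2 u) (c x : F) :
    fderiv ℝ (gradNormSq b u) x (x - c) + finrank ℝ F * gradNormSq b u x =
      2 * ∑ i, ⟪fderiv ℝ u x (b i), dilationGenerator c (fun y ↦ fderiv ℝ u y (b i)) x⟫_ℝ := by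
  have hdiff (i) := (contDiff_one_fderiv_apply hu (b i)).differentiable one_ne_zero x
  have hsum : fderiv ℝ (gradNormSq b u) x (x - c) =
      ∑ i, fderiv ℝ (fun y ↦ ‖fderiv ℝ u y (b i)‖ ^ 2) x (x - c) := by
    rw [show gradNormSq b u = fun y ↦ ∑ i, ‖fderiv ℝ u y (b i)‖ ^ 2 from rfl,
      fderiv_fun_sum fun i _ ↦ (hdiff i).norm_sq ℝ, sum_apply]
  simp_rw [hsum, gradNormSq, Finset.mul_sum, two_mul_inner_dilationGenerator (hdiff _),
    Finset.sum_add_distrib]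

lemma laplacian_eq_sum_fderiv_fderiv [FiniteDimensional ℝ F] (b : OrthonormalBasis ι ℝ F)
    (hu : ContDiff ℝ 2 u) (x : F) :
    Δ u x = ∑ i, fderiv ℝ (fun y ↦ fderiv ℝ u y (b i)) x (b i) := by
  simp [InnerProductSpace.laplacian_eq_iteratedFDeriv_orthonormalBasis u b,
    iteratedFDeriv_two_apply, fderiv_fderiv_apply hu]

lemma continuous_laplacian [FiniteDimensional ℝ F] (hu : ContDiff ℝ 2 u) : Continuous (Δ u) := by
  rw [funext (laplacian_eq_sum_fderiv_fderiv (stdOrthonormalBasis ℝ F) hu)]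
  exact continuous_finsetSum _ fun i _ ↦
    continuous_fderiv_apply (contDiff_one_fderiv_apply hu _) _

lemma laplacian_eq_zero_of_notMem_tsupport [FiniteDimensional ℝ F] {x : F} (hx : x ∉ tsupport u) :
    Δ u x = 0 := by
  have hlap : Δ u x = Δ (0 : F → G) x :=
    (InnerProductSpace.laplacian_congr_nhds (notMem_tsupport_iff_eventuallyEq.1 hx)).eq_of_nhds
  rw [hlap, Pi.zero_def, InnerProductSpace.laplacian_const, Pi.zero_apply]

end GradientAndLaplacian

section IntegrationByParts

variable {F G ι : Type*} [NormedAddCommGroup F] [InnerProductSpace ℝ F] [FiniteDimensional ℝ F]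
  [MeasurableSpace F] [BorelSpace F] [NormedAddCommGroup G] [InnerProductSpace ℝ G] [Fintype ι]
  {u : F → G}

lemma integral_inner_fderiv_eq_neg (hu : ContDiff ℝ 1 u) (huc : HasCompactSupport u)
    {g : F → G} (hg : ContDiff ℝ 1 g) (e : F) :
    ∫ x, ⟪fderiv ℝ u x e, g x⟫_ℝ = -∫ x, ⟪u x, fderiv ℝ g x e⟫_ℝ := by
  have hcont := hu.continuous
  have hcont' := continuous_fderiv_apply hu e
  have hgcont := hg.continuous
  have hgcont' := continuous_fderiv_apply hg e
  have hint : Integrable fun x ↦ ⟪u x, g x⟫_ℝ :=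
    integrable_of_eq_zero_of_notMem_tsupport huc (by fun_prop) fun x hx ↦ by
      simp [image_eq_zero_of_notMem_tsupport hx]
  have hint_left : Integrable fun x ↦ ⟪fderiv ℝ u x e, g x⟫_ℝ :=
    integrable_of_eq_zero_of_notMem_tsupport huc (by fun_prop) fun x hx ↦ by
      simp [fderiv_of_notMem_tsupport ℝ hx]
  have hint_right : Integrable fun x ↦ ⟪u x, fderiv ℝ g x e⟫_ℝ :=
    integrable_of_eq_zero_of_notMem_tsupport huc (by fun_prop) fun x hx ↦ by
      simp [image_eq_zero_of_notMem_tsupport hx]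
  rw [eq_comm, neg_eq_iff_eq_neg]
  exact integral_bilinear_fderiv_right_eq_neg_left_of_integrable (B := innerSL ℝ)
    hint_left hint_right hint (fun x _ ↦ hu.differentiable one_ne_zero x)
    (fun x _ ↦ hg.differentiable one_ne_zero x)

lemma integral_fderiv_apply_sub_add_finrank_mul {g : F → ℝ} (hg : ContDiff ℝ 1 g)
    (hgc : HasCompactSupport g) (c : F) :
    ∫ x, (fderiv ℝ g x (x - c) + finrank ℝ F * g x) = 0 := by
  let b := stdOrthonormalBasis ℝ F
  have hcont := hg.continuous
  have hcont' (e : F) := continuous_fderiv_apply hg e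
  have hterm (i) : ∫ x, fderiv ℝ g x (b i) * ⟪b i, x - c⟫_ℝ = -∫ x, g x := by
    have hderiv (x : F) : fderiv ℝ (fun y ↦ ⟪b i, y - c⟫_ℝ) x (b i) = 1 := by
      have h : HasFDerivAt (fun y ↦ ⟪b i, y - c⟫_ℝ) (innerSL ℝ (b i)) x :=
        (innerSL ℝ (b i)).hasFDerivAt.comp x ((hasFDerivAt_id x).sub_const c)
      simp [h.fderiv]
    have hparts := integral_inner_fderiv_eq_neg hg hgc
      (contDiff_const.inner ℝ (contDiff_id.sub contDiff_const) :
        ContDiff ℝ 1 fun x ↦ ⟪b i, x - c⟫_ℝ) (b i)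
    simpa [hderiv, mul_comm] using hparts
  have hint (i) : Integrable fun x ↦ fderiv ℝ g x (b i) * ⟪b i, x - c⟫_ℝ :=
    integrable_of_eq_zero_of_notMem_tsupport hgc (by fun_prop) fun x hx ↦ by
      simp [fderiv_of_notMem_tsupport ℝ hx]
  have hexpand (x : F) : fderiv ℝ g x (x - c) = ∑ i, fderiv ℝ g x (b i) * ⟪b i, x - c⟫_ℝ := by
    nth_rw 1 [← b.sum_repr' (x - c)]
    simp [mul_comm]
  simp_rw [hexpand]
  rw [integral_add (integrable_finsetSum _ fun i _ ↦ hint i)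
      ((hcont.integrable_of_hasCompactSupport hgc).const_mul _),
    integral_finsetSum _ fun i _ ↦ hint i, integral_const_mul]
  simp [hterm]

theorem integral_inner_laplacian_eq_neg (b : OrthonormalBasis ι ℝ F) (hu : ContDiff ℝ 2 u)
    (huc : HasCompactSupport u) {g : F → G} (hg : ContDiff ℝ 1 g) :
    ∫ x, ⟪Δ u x, g x⟫_ℝ = -∫ x, ∑ i, ⟪fderiv ℝ u x (b i), fderiv ℝ g x (b i)⟫_ℝ := by
  have hgcont := hg.continuous
  have hgcont' (e : F) := continuous_fderiv_apply hg e
  have hcont' (e : F) := continuous_fderiv_apply (hu.of_le one_le_two) e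
  have hcont'' (e f : F) := continuous_fderiv_apply (contDiff_one_fderiv_apply hu e) f
  have hint (i) : Integrable fun x ↦ ⟪fderiv ℝ u x (b i), fderiv ℝ g x (b i)⟫_ℝ :=
    integrable_of_eq_zero_of_notMem_tsupport huc (by fun_prop) fun x hx ↦ by
      simp [fderiv_of_notMem_tsupport ℝ hx]
  have hint' (i) :
      Integrable fun x ↦ ⟪fderiv ℝ (fun y ↦ fderiv ℝ u y (b i)) x (b i), g x⟫_ℝ :=
    integrable_of_eq_zero_of_notMem_tsupport (huc.fderiv_apply ℝ (b i)) (by fun_prop)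
      fun x hx ↦ by simp [fderiv_of_notMem_tsupport ℝ hx]
  simp_rw [laplacian_eq_sum_fderiv_fderiv b hu, sum_inner]
  rw [integral_finsetSum _ fun i _ ↦ hint' i, integral_finsetSum _ fun i _ ↦ hint i,
    ← Finset.sum_neg_distrib]
  exact Finset.sum_congr rfl fun i _ ↦ integral_inner_fderiv_eq_neg
    (contDiff_one_fderiv_apply hu (b i)) (huc.fderiv_apply ℝ (b i)) hg (b i)

theorem integral_inner_laplacian_dilationGenerator (b : OrthonormalBasis ι ℝ F)
    (hu : ContDiff ℝ 2 u) (huc : HasCompactSupport u) (c : F) :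
    ∫ x, ⟪Δ u x, dilationGenerator c u x⟫_ℝ = -∫ x, gradNormSq b u x := by
  have hgrad := contDiff_gradNormSq b hu
  have hgradc : HasCompactSupport (gradNormSq b u) :=
    .intro huc fun x hx ↦ gradNormSq_eq_zero_of_notMem_tsupport b hx
  have heuler := integral_fderiv_apply_sub_add_finrank_mul hgrad hgradc c
  have hsplit (x : F) :
      ∑ i, ⟪fderiv ℝ u x (b i), fderiv ℝ (dilationGenerator c u) x (b i)⟫_ℝ = gradNormSq b u x +
        2⁻¹ * (fderiv ℝ (gradNormSq b u) x (x - c) + finrank ℝ F * gradNormSq b u x) := by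
    rw [fderiv_gradNormSq_add b hu]
    simp [fderiv_dilationGenerator hu, inner_add_right, Finset.sum_add_distrib, gradNormSq]
  rw [integral_inner_laplacian_eq_neg b hu huc (contDiff_dilationGenerator hu c)]
  simp_rw [hsplit]
  rw [integral_add, integral_const_mul, heuler, mul_zero, add_zero]
  · exact hgrad.continuous.integrable_of_hasCompactSupport hgradc
  · refine (integrable_of_eq_zero_of_notMem_tsupport hgradc ?_ fun x hx ↦ ?_).const_mul _
    · have hcont := hgrad.continuous
      have hradial := continuous_fderiv_apply_sub hgrad c
      fun_prop
    · simp [fderiv_of_notMem_tsupport ℝ hx, image_eq_zero_of_notMem_tsupport hx]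

theorem integral_inner_smul_dilationGenerator {Q : F → ℝ} (hQ : ContDiff ℝ 1 Q)
    (hu : ContDiff ℝ 1 u) (huc : HasCompactSupport u) (c : F) :
    ∫ x, ⟪Q x • u x, dilationGenerator c u x⟫_ℝ =
      -(2⁻¹ * ∫ x, fderiv ℝ Q x (x - c) * ‖u x‖ ^ 2) := by
  have hcont := hu.continuous
  have hQcont := hQ.continuous
  have hQradial := continuous_fderiv_apply_sub hQ c
  have hdil := continuous_dilationGenerator hu c
  have hQu : ContDiff ℝ 1 fun x ↦ Q x * ‖u x‖ ^ 2 := hQ.mul (hu.norm_sq ℝ)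
  have hQuc : HasCompactSupport fun x ↦ Q x * ‖u x‖ ^ 2 :=
    .intro huc fun x hx ↦ by simp [image_eq_zero_of_notMem_tsupport hx]
  have heuler := integral_fderiv_apply_sub_add_finrank_mul hQu hQuc c
  have hsplit (x : F) : fderiv ℝ (fun y ↦ Q y * ‖u y‖ ^ 2) x (x - c) +
      finrank ℝ F * (Q x * ‖u x‖ ^ 2) = 2 * ⟪Q x • u x, dilationGenerator c u x⟫_ℝ +
        fderiv ℝ Q x (x - c) * ‖u x‖ ^ 2 := by
    have hdiff := hu.differentiable one_ne_zero x
    rw [fderiv_fun_mul (hQ.differentiable one_ne_zero x) (hdiff.norm_sq ℝ), real_inner_smul_left,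
      mul_left_comm 2, two_mul_inner_dilationGenerator hdiff]
    simp only [add_apply, smul_apply, smul_eq_mul]
    ring
  simp_rw [hsplit] at heuler
  rw [integral_add, integral_const_mul] at heuler
  · linarith
  · refine (integrable_of_eq_zero_of_notMem_tsupport huc (by fun_prop) fun x hx ↦ ?_).const_mul _
    simp [image_eq_zero_of_notMem_tsupport hx]
  · refine integrable_of_eq_zero_of_notMem_tsupport huc (by fun_prop) fun x hx ↦ ?_
    simp [image_eq_zero_of_notMem_tsupport hx]

end IntegrationByParts

section CarlemanEstimate

variable {F G ι : Type*} [NormedAddCommGroup F] [NormedAddCommGroup G] [InnerProductSpace ℝ G]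
  [Fintype ι] {u : F → G} {W : F → ℝ}

/-- The Carleman phase: quadratic about `c`, and shifted by `1` so as to be positive. -/
def quadraticPhase (c : F) (s : ℝ) (x : F) : ℝ := s / 2 * ‖x - c‖ ^ 2 + 1

/-- The Carleman weight `e^{φ/ε}` with quadratic phase `φ`. -/
def carlemanWeight (c : F) (s ε : ℝ) (x : F) : ℝ := Real.exp (quadraticPhase c s x / ε)

lemma quadraticPhase_pos (c : F) {s : ℝ} (hs : 0 ≤ s) (x : F) : 0 < quadraticPhase c s x := by
  unfold quadraticPhase
  positivity

lemma carlemanWeight_mul_sqrt_div_sq (c : F) (s h θ : ℝ) {ω : ℝ} (hω : 0 < ω) (x : F) :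
    carlemanWeight c s (h * √(θ / ω)) x ^ 2 =
      Real.exp (2 * quadraticPhase c s x * √ω / (h * √θ)) := by
  have hsqrt : √ω ≠ 0 := (Real.sqrt_pos.2 hω).ne'
  rw [carlemanWeight, ← Real.exp_nat_mul, Real.sqrt_div' _ hω.le, Nat.cast_ofNat]
  congr 1
  field_simp

variable [InnerProductSpace ℝ F]

lemma contDiff_quadraticPhase {n : WithTop ℕ∞} (c : F) (s : ℝ) :
    ContDiff ℝ n (quadraticPhase c s) :=
  (contDiff_const.mul ((contDiff_id.sub contDiff_const).norm_sq ℝ)).add contDiff_const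

lemma contDiff_carlemanWeight {n : WithTop ℕ∞} (c : F) (s ε : ℝ) :
    ContDiff ℝ n (carlemanWeight c s ε) :=
  ((contDiff_quadraticPhase c s).div_const ε).exp

lemma hasFDerivAt_norm_sub_sq (c x : F) :
    HasFDerivAt (fun y ↦ ‖y - c‖ ^ 2) (2 • innerSL ℝ (x - c)) x :=
  ((hasFDerivAt_id x).sub_const c).norm_sq

lemma fderiv_carlemanWeight_smul (c : F) (s ε : ℝ) {x : F} (hu : DifferentiableAt ℝ u x) (e : F) :
    fderiv ℝ (fun y ↦ carlemanWeight c s ε y • u y) x e =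
      carlemanWeight c s ε x • (fderiv ℝ u x e + (s / ε * ⟪x - c, e⟫_ℝ) • u x) := by
  have hphase : HasFDerivAt (fun y ↦ quadraticPhase c s y / ε) _ x :=
    (((hasFDerivAt_norm_sub_sq c x).const_mul (s / 2)).add_const 1).mul_const ε⁻¹
  have hweight : HasFDerivAt (carlemanWeight c s ε) _ x := hphase.exp
  rw [(hweight.fun_smul hu.hasFDerivAt).fderiv]
  simp only [carlemanWeight, quadraticPhase, add_apply, smul_apply,
    ContinuousLinearMap.smulRight_apply, innerSL_apply_apply, smul_eq_mul, nsmul_eq_mul,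
    Nat.cast_ofNat, smul_add, smul_smul, div_eq_mul_inv]
  congr 2
  ring

lemma fderiv_fderiv_carlemanWeight_smul (c : F) (s ε : ℝ) (hu : ContDiff ℝ 2 u) (x e : F) :
    fderiv ℝ (fun y ↦ fderiv ℝ (fun z ↦ carlemanWeight c s ε z • u z) y e) x e =
      carlemanWeight c s ε x • (fderiv ℝ (fun y ↦ fderiv ℝ u y e) x e +
        (2 * (s / ε)) • fderiv ℝ u x (⟪x - c, e⟫_ℝ • e) +
        (s / ε * ‖e‖ ^ 2 + (s / ε) ^ 2 * ⟪x - c, e⟫_ℝ ^ 2) • u x) := by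
  have hdu (y : F) : DifferentiableAt ℝ u y := hu.differentiable two_ne_zero y
  have hinner : HasFDerivAt (fun y ↦ s / ε * ⟪y - c, e⟫_ℝ) _ x :=
    (((hasFDerivAt_id x).sub_const c).inner ℝ (hasFDerivAt_const e x)).const_mul (s / ε)
  have hdd : HasFDerivAt (fun y ↦ fderiv ℝ u y e) _ x :=
    ((contDiff_one_fderiv_apply hu e).differentiable one_ne_zero x).hasFDerivAt
  have hder := hdd.fun_add (hinner.fun_smul (hdu x).hasFDerivAt)
  simp_rw [fderiv_carlemanWeight_smul c s ε (hdu _) e]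
  rw [fderiv_carlemanWeight_smul c s ε hder.differentiableAt, hder.fderiv]
  simp only [id_eq, add_apply, smul_apply, ContinuousLinearMap.smulRight_apply,
    ContinuousLinearMap.comp_apply, ContinuousLinearMap.prod_apply, ContinuousLinearMap.id_apply,
    zero_apply, fderivInnerCLM_apply, inner_zero_right, real_inner_self_eq_norm_sq, zero_add,
    smul_eq_mul, smul_add, map_smul]
  module

lemma carlemanWeight_sq_mul_gradNormSq_le (b : OrthonormalBasis ι ℝ F) {x : F}
    (hu : DifferentiableAt ℝ u x) (c : F) (s : ℝ) {ε : ℝ} (hε : ε ≠ 0) :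
    carlemanWeight c s ε x ^ 2 * (ε ^ 2 * gradNormSq b u x) ≤
      2 * (ε ^ 2 * gradNormSq b (fun y ↦ carlemanWeight c s ε y • u y) x) +
        2 * (s ^ 2 * ‖x - c‖ ^ 2 * ‖carlemanWeight c s ε x • u x‖ ^ 2) := by
  set w := carlemanWeight c s ε x with hw
  have hcomponent (e : F) : w ^ 2 * (ε ^ 2 * ‖fderiv ℝ u x e‖ ^ 2) ≤
      2 * (ε ^ 2 * ‖fderiv ℝ (fun y ↦ carlemanWeight c s ε y • u y) x e‖ ^ 2) +
        2 * (s ^ 2 * ⟪x - c, e⟫_ℝ ^ 2 * ‖w • u x‖ ^ 2) := by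
    set p := ε • fderiv ℝ (fun y ↦ carlemanWeight c s ε y • u y) x e with hp
    set q := (s * ⟪x - c, e⟫_ℝ) • w • u x with hq
    have hconj : (w * ε) • fderiv ℝ u x e = p - q := by
      rw [hp, hq, fderiv_carlemanWeight_smul c s ε hu, ← hw]
      match_scalars
      · ring
      · field_simp
        ring
    calc w ^ 2 * (ε ^ 2 * ‖fderiv ℝ u x e‖ ^ 2)
        = ‖p - q‖ ^ 2 := by rw [← hconj, norm_smul, Real.norm_eq_abs, mul_pow, sq_abs]; ring
      _ ≤ 2 * ‖p‖ ^ 2 + 2 * ‖q‖ ^ 2 := by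
        linarith [parallelogram_law_with_norm ℝ p q, mul_self_nonneg ‖p + q‖]
      _ = _ := by
        rw [hp, hq, norm_smul, norm_smul, mul_pow, mul_pow, Real.norm_eq_abs, Real.norm_eq_abs,
          sq_abs, sq_abs, mul_pow]
  have hsum := Finset.sum_le_sum fun i (_ : i ∈ Finset.univ) ↦ hcomponent (b i)
  rw [Finset.sum_add_distrib] at hsum
  simp_rw [← Finset.mul_sum, ← Finset.sum_mul, ← Finset.mul_sum] at hsum
  simpa [gradNormSq, b.sum_sq_inner_left] using hsum

lemma carlemanWeight_sq_mul_le_virial (b : OrthonormalBasis ι ℝ F) {x : F}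
    (hu : DifferentiableAt ℝ u x) {c : F} {s ε a : ℝ} (hε : ε ≠ 0) (hs : 1 ≤ s)
    (hxc : 1 ≤ ‖x - c‖) (ha : a ≤ s ^ 2 * ‖x - c‖ ^ 2) :
    carlemanWeight c s ε x ^ 2 * (‖u x‖ ^ 2 + ε ^ 2 * gradNormSq b u x) ≤
      8 * s * (ε ^ 2 * gradNormSq b (fun y ↦ carlemanWeight c s ε y • u y) x -
        2⁻¹ * ((a - 2 * s ^ 2 * ‖x - c‖ ^ 2) * ‖carlemanWeight c s ε x • u x‖ ^ 2)) := by
  set w := carlemanWeight c s ε x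
  have hgrad := carlemanWeight_sq_mul_gradNormSq_le b hu c s hε
  set k := ε ^ 2 * gradNormSq b (fun y ↦ carlemanWeight c s ε y • u y) x
  set m := s ^ 2 * ‖x - c‖ ^ 2
  have hnorm : ‖w • u x‖ ^ 2 = w ^ 2 * ‖u x‖ ^ 2 := by
    rw [norm_smul, mul_pow, Real.norm_eq_abs, sq_abs]
  have hk : 0 ≤ k := mul_nonneg (sq_nonneg _) (Finset.sum_nonneg fun i _ ↦ sq_nonneg _)
  have hm : 1 ≤ m := one_le_mul_of_one_le_of_one_le (one_le_pow₀ hs) (one_le_pow₀ hxc)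
  calc w ^ 2 * (‖u x‖ ^ 2 + ε ^ 2 * gradNormSq b u x)
      ≤ 2 * k + (1 + 2 * m) * ‖w • u x‖ ^ 2 := by linarith
    _ ≤ 1 * (8 * k + 4 * m * ‖w • u x‖ ^ 2) := by nlinarith [sq_nonneg ‖w • u x‖]
    _ ≤ s * (8 * k + 4 * m * ‖w • u x‖ ^ 2) := by gcongr
    _ ≤ s * (8 * k + 4 * (2 * m - a) * ‖w • u x‖ ^ 2) := by gcongr; linarith
    _ = 8 * s * (k - 2⁻¹ * ((a - 2 * s ^ 2 * ‖x - c‖ ^ 2) * ‖w • u x‖ ^ 2)) := by ring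

lemma fderiv_sub_sq_mul_norm_sub_sq {x : F} (hW : DifferentiableAt ℝ W x) (c : F) (s : ℝ) :
    fderiv ℝ (fun y ↦ W y - s ^ 2 * ‖y - c‖ ^ 2) x (x - c) =
      fderiv ℝ W x (x - c) - 2 * s ^ 2 * ‖x - c‖ ^ 2 := by
  rw [(hW.hasFDerivAt.fun_sub ((hasFDerivAt_norm_sub_sq c x).const_mul (s ^ 2))).fderiv]
  simp only [sub_apply, smul_apply, innerSL_apply_apply, real_inner_self_eq_norm_sq, smul_eq_mul,
    nsmul_eq_mul, Nat.cast_ofNat]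
  ring

variable [FiniteDimensional ℝ F]

/-- The semiclassical Schrödinger operator `-h²Δ + W`; a spectral parameter is absorbed in `W`. -/
def semiclassicalSchrodinger (h : ℝ) (W : F → ℝ) (u : F → G) (x : F) : G :=
  -h ^ 2 • Δ u x + W x • u x

lemma continuous_semiclassicalSchrodinger (hW : Continuous W) (hu : ContDiff ℝ 2 u) (h : ℝ) :
    Continuous (semiclassicalSchrodinger h W u) :=
  ((continuous_laplacian hu).const_smul _).add (hW.smul hu.continuous)

lemma semiclassicalSchrodinger_eq_zero_of_notMem_tsupport (h : ℝ) (W : F → ℝ) {x : F}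
    (hx : x ∉ tsupport u) : semiclassicalSchrodinger h W u x = 0 := by
  simp [semiclassicalSchrodinger, laplacian_eq_zero_of_notMem_tsupport hx,
    image_eq_zero_of_notMem_tsupport hx]

lemma semiclassicalSchrodinger_mul_sqrt {q : ℝ} (hq : 0 ≤ q) (h : ℝ) (W : F → ℝ) (u : F → G)
    (x : F) :
    semiclassicalSchrodinger (h * √q) (fun y ↦ q * W y) u x =
      q • semiclassicalSchrodinger h W u x := by
  rw [semiclassicalSchrodinger, semiclassicalSchrodinger, mul_pow, Real.sq_sqrt hq]
  module

lemma laplacian_carlemanWeight_smul (c : F) (s ε : ℝ) (hu : ContDiff ℝ 2 u) (x : F) :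
    Δ (fun y ↦ carlemanWeight c s ε y • u y) x =
      carlemanWeight c s ε x • (Δ u x + (2 * (s / ε)) • fderiv ℝ u x (x - c) +
        (s / ε * finrank ℝ F + (s / ε) ^ 2 * ‖x - c‖ ^ 2) • u x) := by
  let b := stdOrthonormalBasis ℝ F
  have hradial : ∑ i, ⟪x - c, b i⟫_ℝ • b i = x - c := by
    simpa only [real_inner_comm] using b.sum_repr' (x - c)
  have hwu : ContDiff ℝ 2 fun y ↦ carlemanWeight c s ε y • u y :=
    (contDiff_carlemanWeight c s ε).smul hu
  have hnorm : ∑ i, ⟪x - c, b i⟫_ℝ ^ 2 = ‖x - c‖ ^ 2 := by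
    simpa using b.sum_sq_norm_inner_left (x - c)
  rw [laplacian_eq_sum_fderiv_fderiv b hwu, laplacian_eq_sum_fderiv_fderiv b hu]
  simp_rw [fderiv_fderiv_carlemanWeight_smul c s ε hu, ← Finset.smul_sum,
    Finset.sum_add_distrib, ← Finset.smul_sum, ← map_sum, ← Finset.sum_smul,
    Finset.sum_add_distrib, ← Finset.mul_sum, hradial, hnorm]
  simp

lemma carlemanWeight_smul_semiclassicalSchrodinger (c : F) (s : ℝ) {ε : ℝ} (hε : ε ≠ 0)
    (W : F → ℝ) (hu : ContDiff ℝ 2 u) (x : F) :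
    carlemanWeight c s ε x • semiclassicalSchrodinger ε W u x =
      semiclassicalSchrodinger ε (fun y ↦ W y - s ^ 2 * ‖y - c‖ ^ 2)
          (fun y ↦ carlemanWeight c s ε y • u y) x +
        (2 * ε * s) • dilationGenerator c (fun y ↦ carlemanWeight c s ε y • u y) x := by
  rw [semiclassicalSchrodinger, semiclassicalSchrodinger, dilationGenerator,
    laplacian_carlemanWeight_smul c s ε hu,
    fderiv_carlemanWeight_smul c s ε (hu.differentiable two_ne_zero x), real_inner_self_eq_norm_sq]
  match_scalars <;> field_simp <;> ring

variable [MeasurableSpace F] [BorelSpace F]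

theorem integral_inner_semiclassicalSchrodinger_dilationGenerator (b : OrthonormalBasis ι ℝ F)
    {Q : F → ℝ} (hQ : ContDiff ℝ 1 Q) (hu : ContDiff ℝ 2 u) (huc : HasCompactSupport u) (c : F)
    (h : ℝ) :
    ∫ x, ⟪semiclassicalSchrodinger h Q u x, dilationGenerator c u x⟫_ℝ =
      ∫ x, (h ^ 2 * gradNormSq b u x - 2⁻¹ * (fderiv ℝ Q x (x - c) * ‖u x‖ ^ 2)) := by
  have hu₁ : ContDiff ℝ 1 u := hu.of_le one_le_two
  have hcont := hu.continuous
  have hQcont := hQ.continuous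
  have hlap := continuous_laplacian hu
  have hdil := continuous_dilationGenerator hu₁ c
  have hforce := continuous_fderiv_apply_sub hQ c
  have hint_lap : Integrable fun x ↦ ⟪Δ u x, dilationGenerator c u x⟫_ℝ :=
    integrable_of_eq_zero_of_notMem_tsupport huc (by fun_prop) fun x hx ↦ by
      simp [laplacian_eq_zero_of_notMem_tsupport hx]
  have hint_pot : Integrable fun x ↦ ⟪Q x • u x, dilationGenerator c u x⟫_ℝ :=
    integrable_of_eq_zero_of_notMem_tsupport huc (by fun_prop) fun x hx ↦ by
      simp [image_eq_zero_of_notMem_tsupport hx]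
  have hint_grad : Integrable (gradNormSq b u) :=
    integrable_of_eq_zero_of_notMem_tsupport huc (contDiff_gradNormSq b hu).continuous
      fun x hx ↦ gradNormSq_eq_zero_of_notMem_tsupport b hx
  have hint_force : Integrable fun x ↦ fderiv ℝ Q x (x - c) * ‖u x‖ ^ 2 :=
    integrable_of_eq_zero_of_notMem_tsupport huc (by fun_prop) fun x hx ↦ by
      simp [image_eq_zero_of_notMem_tsupport hx]
  simp_rw [semiclassicalSchrodinger, inner_add_left, real_inner_smul_left _ _ (-h ^ 2)]
  rw [integral_add (hint_lap.const_mul _) hint_pot, integral_const_mul,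
    integral_inner_laplacian_dilationGenerator b hu huc,
    integral_inner_smul_dilationGenerator hQ hu₁ huc,
    integral_sub (hint_grad.const_mul _) (hint_force.const_mul _), integral_const_mul,
    integral_const_mul]
  ring

theorem integral_virial_le (b : OrthonormalBasis ι ℝ F) {Q : F → ℝ} (hQ : ContDiff ℝ 1 Q)
    (hu : ContDiff ℝ 2 u) (huc : HasCompactSupport u) (c : F) (h t : ℝ) :
    4 * t * ∫ x, (h ^ 2 * gradNormSq b u x - 2⁻¹ * (fderiv ℝ Q x (x - c) * ‖u x‖ ^ 2)) ≤
      ∫ x, ‖semiclassicalSchrodinger h Q u x + t • dilationGenerator c u x‖ ^ 2 := by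
  have hdil := continuous_dilationGenerator (hu.of_le one_le_two) c
  have hschr := continuous_semiclassicalSchrodinger hQ.continuous hu h
  rw [← integral_inner_semiclassicalSchrodinger_dilationGenerator b hQ hu huc,
    ← integral_const_mul]
  refine integral_mono ?_ ?_ fun x ↦ ?_
  · refine integrable_of_eq_zero_of_notMem_tsupport huc (by fun_prop) fun x hx ↦ ?_
    simp [semiclassicalSchrodinger_eq_zero_of_notMem_tsupport h Q hx]
  · refine integrable_of_eq_zero_of_notMem_tsupport huc (by fun_prop) fun x hx ↦ ?_
    simp [semiclassicalSchrodinger_eq_zero_of_notMem_tsupport h Q hx,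
      dilationGenerator_eq_zero_of_notMem_tsupport c hx]
  · dsimp only
    have hsub := norm_sub_sq_real (semiclassicalSchrodinger h Q u x) (t • dilationGenerator c u x)
    rw [real_inner_smul_right] at hsub
    rw [norm_add_sq_real, real_inner_smul_right]
    linarith [sq_nonneg ‖semiclassicalSchrodinger h Q u x - t • dilationGenerator c u x‖]

lemma integral_carlemanWeight_sq_mul_le_virial (b : OrthonormalBasis ι ℝ F) (hW : ContDiff ℝ 1 W)
    (hu : ContDiff ℝ 2 u) (huc : HasCompactSupport u) {c : F} {s ε : ℝ} (hε : ε ≠ 0) (hs : 1 ≤ s)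
    (hc : ∀ x ∈ tsupport u, 1 ≤ ‖x - c‖)
    (hforce : ∀ x ∈ tsupport u, fderiv ℝ W x (x - c) ≤ s ^ 2 * ‖x - c‖ ^ 2) :
    ∫ x, carlemanWeight c s ε x ^ 2 * (‖u x‖ ^ 2 + ε ^ 2 * gradNormSq b u x) ≤
      8 * s * ∫ x, (ε ^ 2 * gradNormSq b (fun y ↦ carlemanWeight c s ε y • u y) x -
        2⁻¹ * (fderiv ℝ (fun y ↦ W y - s ^ 2 * ‖y - c‖ ^ 2) x (x - c) *
          ‖carlemanWeight c s ε x • u x‖ ^ 2)) := by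
  have hdiff (x : F) : DifferentiableAt ℝ W x := hW.differentiable one_ne_zero x
  have hw : ContDiff ℝ 2 (carlemanWeight c s ε) := contDiff_carlemanWeight c s ε
  have hcont := hu.continuous
  have hwcont := hw.continuous
  have hforcecont := continuous_fderiv_apply_sub hW c
  have hgrad := (contDiff_gradNormSq b hu).continuous
  have hgradv := (contDiff_gradNormSq b (hw.smul hu)).continuous
  have hgradv_zero {x : F} (hx : x ∉ tsupport u) :
      gradNormSq b (fun y ↦ carlemanWeight c s ε y • u y) x = 0 :=
    gradNormSq_eq_zero_of_notMem_tsupport b fun h ↦ hx (tsupport_smul_subset_right _ _ h)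
  simp_rw [fderiv_sub_sq_mul_norm_sub_sq (hdiff _)]
  rw [← integral_const_mul]
  refine integral_mono ?_ ?_ fun x ↦ ?_
  · refine integrable_of_eq_zero_of_notMem_tsupport huc (by fun_prop) fun x hx ↦ ?_
    simp [image_eq_zero_of_notMem_tsupport hx, gradNormSq_eq_zero_of_notMem_tsupport b hx]
  · refine integrable_of_eq_zero_of_notMem_tsupport huc (by fun_prop) fun x hx ↦ ?_
    simp [image_eq_zero_of_notMem_tsupport hx, hgradv_zero hx]
  by_cases hx : x ∈ tsupport u
  · exact carlemanWeight_sq_mul_le_virial b (hu.differentiable two_ne_zero x) hε hs (hc x hx)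
      (hforce x hx)
  · simp [image_eq_zero_of_notMem_tsupport hx, gradNormSq_eq_zero_of_notMem_tsupport b hx,
      hgradv_zero hx]

theorem carleman_estimate (b : OrthonormalBasis ι ℝ F) (hW : ContDiff ℝ 1 W)
    (hu : ContDiff ℝ 2 u) (huc : HasCompactSupport u) {c : F} {s ε : ℝ} (hε : 0 < ε) (hs : 1 ≤ s)
    (hc : ∀ x ∈ tsupport u, 1 ≤ ‖x - c‖)
    (hforce : ∀ x ∈ tsupport u, fderiv ℝ W x (x - c) ≤ s ^ 2 * ‖x - c‖ ^ 2) :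
    ε * ∫ x, carlemanWeight c s ε x ^ 2 * (‖u x‖ ^ 2 + ε ^ 2 * gradNormSq b u x) ≤
      ∫ x, carlemanWeight c s ε x ^ 2 * ‖semiclassicalSchrodinger ε W u x‖ ^ 2 := by
  let v : F → G := fun y ↦ carlemanWeight c s ε y • u y
  let Q : F → ℝ := fun y ↦ W y - s ^ 2 * ‖y - c‖ ^ 2
  have hv : ContDiff ℝ 2 v := (contDiff_carlemanWeight c s ε).smul hu
  have hQ : ContDiff ℝ 1 Q :=
    hW.sub (contDiff_const.mul ((contDiff_id.sub contDiff_const).norm_sq ℝ))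
  calc ε * ∫ x, carlemanWeight c s ε x ^ 2 * (‖u x‖ ^ 2 + ε ^ 2 * gradNormSq b u x)
      ≤ ε * (8 * s * ∫ x,
          (ε ^ 2 * gradNormSq b v x - 2⁻¹ * (fderiv ℝ Q x (x - c) * ‖v x‖ ^ 2))) := by
        gcongr
        exact integral_carlemanWeight_sq_mul_le_virial b hW hu huc hε.ne' hs hc hforce
    _ = 4 * (2 * ε * s) * ∫ x,
          (ε ^ 2 * gradNormSq b v x - 2⁻¹ * (fderiv ℝ Q x (x - c) * ‖v x‖ ^ 2)) := by ring
    _ ≤ ∫ x, ‖semiclassicalSchrodinger ε Q v x + (2 * ε * s) • dilationGenerator c v x‖ ^ 2 :=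
        integral_virial_le b hQ hv huc.smul_left c ε _
    _ = ∫ x, carlemanWeight c s ε x ^ 2 * ‖semiclassicalSchrodinger ε W u x‖ ^ 2 := by
        congr 1 with x
        rw [← carlemanWeight_smul_semiclassicalSchrodinger c s hε.ne' W hu, norm_smul, mul_pow,
          Real.norm_eq_abs, sq_abs]

theorem carleman_estimate_of_norm_fderiv_le (b : OrthonormalBasis ι ℝ F) (hW : ContDiff ℝ 1 W)
    (hu : ContDiff ℝ 2 u) (huc : HasCompactSupport u) {c : F} {s h q : ℝ} (hh : 0 < h)
    (hq : 0 < q) (hs : 1 ≤ s) (hc : ∀ x ∈ tsupport u, 1 ≤ ‖x - c‖)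
    (hgrad : ∀ x ∈ tsupport u, q * ‖fderiv ℝ W x‖ ≤ s ^ 2) :
    h * ∫ x, carlemanWeight c s (h * √q) x ^ 2 *
        (‖u x‖ ^ 2 + q * (h ^ 2 * gradNormSq b u x)) ≤
      q ^ (3 / 2 : ℝ) * ∫ x, carlemanWeight c s (h * √q) x ^ 2 *
        ‖semiclassicalSchrodinger h W u x‖ ^ 2 := by
  have hforce (x : F) (hx : x ∈ tsupport u) :
      fderiv ℝ (fun y ↦ q * W y) x (x - c) ≤ s ^ 2 * ‖x - c‖ ^ 2 := by
    rw [fderiv_const_mul (hW.differentiable one_ne_zero x)]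
    calc q * fderiv ℝ W x (x - c)
        ≤ q * (‖fderiv ℝ W x‖ * ‖x - c‖) := by
          gcongr
          exact (le_abs_self _).trans ((fderiv ℝ W x).le_opNorm _)
      _ = q * ‖fderiv ℝ W x‖ * ‖x - c‖ := by ring
      _ ≤ s ^ 2 * ‖x - c‖ ^ 2 := by
          gcongr
          · exact hgrad x hx
          · exact le_self_pow₀ (hc x hx) two_ne_zero
  have hgrad_eq (x : F) : q * (h ^ 2 * gradNormSq b u x) = (h * √q) ^ 2 * gradNormSq b u x := by
    rw [mul_pow, Real.sq_sqrt hq.le]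
    ring
  have hpow : √q * q ^ (3 / 2 : ℝ) = q ^ 2 := by
    rw [Real.sqrt_eq_rpow, ← Real.rpow_add hq, ← Real.rpow_natCast]
    norm_num
  refine le_of_mul_le_mul_left ?_ (Real.sqrt_pos.2 hq)
  simp_rw [hgrad_eq]
  rw [← mul_assoc, ← mul_assoc, hpow, mul_comm √q, ← integral_const_mul (q ^ 2)]
  have hest := carleman_estimate b (contDiff_const.mul hW) hu huc
    (mul_pos hh (Real.sqrt_pos.2 hq)) hs hc hforce
  refine hest.trans_eq (integral_congr_ae (.of_forall fun x ↦ ?_))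
  dsimp only
  rw [semiclassicalSchrodinger_mul_sqrt hq.le, norm_smul, Real.norm_of_nonneg hq.le]
  ring

end CarlemanEstimate

section Mollification

variable {E : Type*} [NormedAddCommGroup E] [NormedSpace ℝ E] {φ : E → ℝ} {θ : ℝ}

/-- The kernel `θ⁻ᵈ φ(·/θ)`, of the same mass as `φ`, in dimension `d`. -/
def rescaledKernel (φ : E → ℝ) (θ : ℝ) (t : E) : ℝ := (θ ^ finrank ℝ E)⁻¹ * φ (θ⁻¹ • t)

lemma contDiff_rescaledKernel {n : WithTop ℕ∞} (hφ : ContDiff ℝ n φ) (θ : ℝ) :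
    ContDiff ℝ n (rescaledKernel φ θ) :=
  contDiff_const.mul (hφ.comp (contDiff_const_smul θ⁻¹))

lemma tsupport_rescaledKernel_subset (hφ : tsupport φ ⊆ closedBall 0 1) (hθ : 0 < θ) :
    tsupport (rescaledKernel φ θ) ⊆ closedBall 0 θ := by
  refine closure_minimal (fun t ht ↦ ?_) isClosed_closedBall
  have hmem : θ⁻¹ • t ∈ closedBall (0 : E) 1 :=
    hφ (subset_tsupport φ (right_ne_zero_of_mul ht))
  rw [mem_closedBall_zero_iff, norm_smul, Real.norm_of_nonneg (by positivity)] at hmem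
  rwa [mem_closedBall_zero_iff, ← inv_mul_le_one₀ hθ]

variable [FiniteDimensional ℝ E]

lemma hasCompactSupport_rescaledKernel (hφ : tsupport φ ⊆ closedBall 0 1) (hθ : 0 < θ) :
    HasCompactSupport (rescaledKernel φ θ) :=
  (isCompact_closedBall 0 θ).of_isClosed_subset (isClosed_tsupport _)
    (tsupport_rescaledKernel_subset hφ hθ)

variable [MeasurableSpace E] [BorelSpace E] {μ : Measure E} [μ.IsAddHaarMeasure]
  {f V : E → ℝ}

lemma hasFDerivAt_convolution_lsmul (hf : ContDiff ℝ 1 f) (hfc : HasCompactSupport f)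
    (hV : LocallyIntegrable V μ) (x : E) :
    HasFDerivAt (f ⋆[ContinuousLinearMap.lsmul ℝ ℝ, μ] V) (∫ t, V (x - t) • fderiv ℝ f t ∂μ) x := by
  have hder := hfc.hasFDerivAt_convolution_left (ContinuousLinearMap.lsmul ℝ ℝ) hf hV x
  have hcongr : (fderiv ℝ f ⋆[(ContinuousLinearMap.lsmul ℝ ℝ).precompL E, μ] V) x =
      ∫ t, V (x - t) • fderiv ℝ f t ∂μ := by
    refine integral_congr_ae (.of_forall fun t ↦ ?_)
    ext e
    simp [ContinuousLinearMap.precompL_apply, mul_comm]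
  rwa [hcongr] at hder

lemma integral_fderiv_eq_zero (hf : ContDiff ℝ 1 f) (hfc : HasCompactSupport f) :
    ∫ t, fderiv ℝ f t ∂μ = 0 := by
  have hder := hasFDerivAt_convolution_lsmul hf hfc (locallyIntegrable_const (μ := μ) (1 : ℝ)) 0
  have hconst : (f ⋆[ContinuousLinearMap.lsmul ℝ ℝ, μ] fun _ ↦ (1 : ℝ)) = fun _ ↦ ∫ t, f t ∂μ := by
    ext x
    simp [convolution_def]
  rw [hconst] at hder
  simpa using hder.unique (hasFDerivAt_const _ _)

theorem norm_fderiv_convolution_le (hf : ContDiff ℝ 1 f) (hfc : HasCompactSupport f)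
    (hV : LocallyIntegrable V μ) {x : E} {ω : ℝ}
    (hω : ∀ t ∈ tsupport f, |V (x - t) - V x| ≤ ω) :
    ‖fderiv ℝ (f ⋆[ContinuousLinearMap.lsmul ℝ ℝ, μ] V) x‖ ≤ ω * ∫ t, ‖fderiv ℝ f t‖ ∂μ := by
  have hint : Integrable (fderiv ℝ f) μ :=
    (hf.continuous_fderiv one_ne_zero).integrable_of_hasCompactSupport (hfc.fderiv ℝ)
  have hint_conv : Integrable (fun t ↦ V (x - t) • fderiv ℝ f t) μ :=
    (hfc.fderiv ℝ).convolutionExists_left (ContinuousLinearMap.lsmul ℝ ℝ).flip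
      (hf.continuous_fderiv one_ne_zero) hV x
  have hcancel : ∫ t, V (x - t) • fderiv ℝ f t ∂μ = ∫ t, (V (x - t) - V x) • fderiv ℝ f t ∂μ := by
    simp_rw [sub_smul]
    rw [integral_sub hint_conv (hint.fun_smul (V x)), integral_smul, integral_fderiv_eq_zero hf hfc,
      smul_zero, sub_zero]
  rw [(hasFDerivAt_convolution_lsmul hf hfc hV x).fderiv, hcancel, ← integral_const_mul]
  refine norm_integral_le_of_norm_le (hint.norm.const_mul ω) (.of_forall fun t ↦ ?_)
  rw [norm_smul, Real.norm_eq_abs]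
  by_cases ht : t ∈ tsupport f
  · gcongr
    exact hω t ht
  · simp [fderiv_of_notMem_tsupport ℝ ht]

lemma integral_norm_fderiv_rescaledKernel (hφ : Differentiable ℝ φ) (hθ : 0 < θ) :
    ∫ t, ‖fderiv ℝ (rescaledKernel φ θ) t‖ ∂μ = θ⁻¹ * ∫ t, ‖fderiv ℝ φ t‖ ∂μ := by
  have hderiv (t : E) : ‖fderiv ℝ (rescaledKernel φ θ) t‖ =
      (θ ^ finrank ℝ E)⁻¹ * θ⁻¹ * ‖fderiv ℝ φ (θ⁻¹ • t)‖ := by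
    have hscaled : DifferentiableAt ℝ (fun y ↦ φ (θ⁻¹ • y)) t := by fun_prop
    rw [show rescaledKernel φ θ = fun y ↦ (θ ^ finrank ℝ E)⁻¹ * φ (θ⁻¹ • y) from rfl,
      fderiv_const_mul hscaled, fderiv_comp_smul, norm_smul, norm_smul, mul_assoc,
      Real.norm_of_nonneg (by positivity), Real.norm_of_nonneg (by positivity)]
  simp_rw [hderiv]
  rw [integral_const_mul,
    Measure.integral_comp_inv_smul_of_nonneg μ (fun t ↦ ‖fderiv ℝ φ t‖) hθ.le, smul_eq_mul]
  field_simp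

theorem norm_fderiv_convolution_rescaledKernel_le (hφ : ContDiff ℝ 1 φ)
    (hφsupp : tsupport φ ⊆ closedBall 0 1) (hθ : 0 < θ) (hV : LocallyIntegrable V μ) {x : E}
    {ω : ℝ} (hω : ∀ t ∈ closedBall 0 θ, |V (x - t) - V x| ≤ ω) :
    ‖fderiv ℝ (rescaledKernel φ θ ⋆[ContinuousLinearMap.lsmul ℝ ℝ, μ] V) x‖ ≤
      ω / θ * ∫ t, ‖fderiv ℝ φ t‖ ∂μ := by
  have hbound := norm_fderiv_convolution_le (contDiff_rescaledKernel hφ θ)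
    (hasCompactSupport_rescaledKernel hφsupp hθ) hV
    fun t ht ↦ hω t (tsupport_rescaledKernel_subset hφsupp hθ ht)
  rwa [integral_norm_fderiv_rescaledKernel (hφ.differentiable one_ne_zero) hθ, ← mul_assoc,
    ← div_eq_mul_inv] at hbound

end Mollification

lemma locallyIntegrable_of_measurable_of_bounded {X : Type*} [TopologicalSpace X]
    [MeasurableSpace X] {μ : Measure X} [IsLocallyFiniteMeasure μ] {V : X → ℝ}
    (hV : Measurable V) (hbdd : ∃ M, ∀ x, |V x| ≤ M) : LocallyIntegrable V μ := by
  obtain ⟨M, hM⟩ := hbdd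
  exact (memLp_top_of_bound hV.aestronglyMeasurable M (.of_forall hM)).locallyIntegrable le_top

lemma exists_forall_one_le_norm_sub {E : Type*} [NormedAddCommGroup E] [NormedSpace ℝ E]
    [Nontrivial E] {U : Set E} (hU : Bornology.IsBounded U) : ∃ c : E, ∀ x ∈ U, 1 ≤ ‖x - c‖ := by
  obtain ⟨R, hR, hUR⟩ := hU.exists_pos_norm_le
  obtain ⟨c, hc⟩ := exists_norm_eq E (by positivity : 0 ≤ R + 1)
  refine ⟨c, fun x hx ↦ ?_⟩
  rw [norm_sub_rev]
  linarith [norm_sub_norm_le c x, hUR x hx]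

section MollifiedPotential

variable {F G ι : Type*} [NormedAddCommGroup F] [InnerProductSpace ℝ F] [FiniteDimensional ℝ F]
  [MeasurableSpace F] [BorelSpace F] [NormedAddCommGroup G] [InnerProductSpace ℝ G] [Fintype ι]

theorem stmt9_general [Nontrivial F] (b : OrthonormalBasis ι ℝ F) {U : Set F}
    (hU : Bornology.IsBounded U) {V φ : F → ℝ} (hV : LocallyIntegrable V) (hφ : ContDiff ℝ 1 φ)
    (hφsupp : tsupport φ ⊆ closedBall 0 1) :
    ∃ ψ : F → ℝ, ContDiff ℝ (⊤ : ℕ∞) ψ ∧ (∀ x, 0 < ψ x) ∧ ∀ h > 0, ∀ θ > 0, ∀ ω > 0,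
      (∀ x ∈ U, ∀ t ∈ closedBall (0 : F) θ, |V (x - t) - V x| ≤ ω) →
        ∀ (E : ℝ) (u : F → G), ContDiff ℝ 2 u → tsupport u ⊆ U →
          h * ∫ x in U, Real.exp (2 * ψ x * √ω / (h * √θ)) *
              (‖u x‖ ^ 2 + θ / ω * (h ^ 2 * gradNormSq b u x)) ≤
            (θ / ω) ^ (3 / 2 : ℝ) * ∫ x in U, Real.exp (2 * ψ x * √ω / (h * √θ)) *
              ‖semiclassicalSchrodinger h (fun y ↦ (rescaledKernel φ θ ⋆ V) y - E) u x‖ ^ 2 := by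
  obtain ⟨c, hc⟩ := exists_forall_one_le_norm_sub hU
  set M := ∫ t, ‖fderiv ℝ φ t‖
  have hM₀ : 0 ≤ M := integral_nonneg fun _ ↦ norm_nonneg _
  refine ⟨quadraticPhase c (1 + M), contDiff_quadraticPhase c _,
    quadraticPhase_pos c (by positivity), fun h hh θ hθ ω hω hosc E u hu hsupp ↦ ?_⟩
  have huc : HasCompactSupport u :=
    Metric.isCompact_of_isClosed_isBounded (isClosed_tsupport u) (hU.subset hsupp)
  have hmoll : ContDiff ℝ 1 (rescaledKernel φ θ ⋆ V) :=
    (hasCompactSupport_rescaledKernel hφsupp hθ).contDiff_convolution_left _ (n := 1)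
      (contDiff_rescaledKernel hφ θ) hV
  have hgrad (x : F) (hx : x ∈ tsupport u) :
      θ / ω * ‖fderiv ℝ (fun y ↦ (rescaledKernel φ θ ⋆ V) y - E) x‖ ≤ (1 + M) ^ 2 := by
    rw [fderiv_sub_const]
    calc _ ≤ θ / ω * (ω / θ * M) := by
          gcongr
          exact norm_fderiv_convolution_rescaledKernel_le hφ hφsupp hθ hV (hosc x (hsupp hx))
      _ = M := by field_simp
      _ ≤ (1 + M) ^ 2 := by nlinarith
  have hest := carleman_estimate_of_norm_fderiv_le b (hmoll.sub contDiff_const) hu huc hh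
    (div_pos hθ hω) (le_add_of_nonneg_right hM₀) (fun x hx ↦ hc x (hsupp hx)) hgrad
  simp_rw [carlemanWeight_mul_sqrt_div_sq c _ h θ hω] at hest
  rw [setIntegral_eq_integral_of_forall_compl_eq_zero fun x hx ↦ ?_,
    setIntegral_eq_integral_of_forall_compl_eq_zero fun x hx ↦ ?_]
  · exact hest
  · simp [semiclassicalSchrodinger_eq_zero_of_notMem_tsupport h _ (fun h' ↦ hx (hsupp h'))]
  · have hx' : x ∉ tsupport u := fun h' ↦ hx (hsupp h')
    simp [image_eq_zero_of_notMem_tsupport hx', gradNormSq_eq_zero_of_notMem_tsupport b hx']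

end MollifiedPotential

lemma basis2_eq_basisFun (i : Fin 2) : basis2 i = EuclideanSpace.basisFun (Fin 2) ℝ i := by
  simp [basis2]

lemma gradSq_eq_gradNormSq (u : E2 → ℂ) :
    gradSq u = gradNormSq (EuclideanSpace.basisFun (Fin 2) ℝ) u := by
  ext x
  simp only [gradSq, gradNormSq, basis2_eq_basisFun]

lemma schrod_eq_semiclassicalSchrodinger (h : ℝ) (W : E2 → ℝ) (E : ℝ) {u : E2 → ℂ}
    (hu : ContDiff ℝ 2 u) :
    schrod h W E u = semiclassicalSchrodinger h (fun y ↦ W y - E) u := by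
  ext x
  rw [schrod, semiclassicalSchrodinger, lapC,
    laplacian_eq_sum_fderiv_fderiv (EuclideanSpace.basisFun (Fin 2) ℝ) hu]
  simp only [basis2_eq_basisFun, Complex.real_smul, Complex.ofReal_neg, Complex.ofReal_pow]

lemma Vreg_eq_convolution (V φ : E2 → ℝ) (θ : ℝ) : Vreg V φ θ = rescaledKernel φ θ ⋆ V := by
  ext x
  rw [Vreg, convolution_def, ← integral_const_mul]
  simp [rescaledKernel, mul_assoc, mul_comm]

lemma abs_sub_le_omegaV {V : E2 → ℝ} (hV : ∃ M, ∀ x, |V x| ≤ M) {R₀ θ : ℝ} {x t : E2}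
    (hx : x ∈ ball 0 R₀) (ht : t ∈ closedBall 0 θ) : |V (x - t) - V x| ≤ omegaV R₀ V θ := by
  obtain ⟨M, hM⟩ := hV
  refine le_csSup ⟨M + M, ?_⟩ ⟨x, hx, t, ht, rfl⟩
  rintro _ ⟨y, -, r, -, rfl⟩
  exact (abs_sub _ _).trans (add_le_add (hM _) (hM _))

theorem stmt9 (R₀ : ℝ) (hR₀ : 0 < R₀) (E₀ : ℝ) (hE₀ : 0 < E₀)
    (V : E2 → ℝ) (hVmeas : Measurable V) (hVbdd : ∃ M : ℝ, ∀ x, |V x| ≤ M)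
    (hω : ∀ θ ∈ Set.Ioc (0 : ℝ) 1, 0 < omegaV R₀ V θ)
    (φ : E2 → ℝ) (hφsmooth : ContDiff ℝ (⊤ : ℕ∞) φ) (hφcpt : HasCompactSupport φ)
    (hφsupp : tsupport φ ⊆ closedBall (0 : E2) 1) (hφnonneg : ∀ x, 0 ≤ φ x)
    (hφmass : ∫ x : E2, φ x = 1) :
    ∃ ψ : E2 → ℝ, ContDiff ℝ (⊤ : ℕ∞) ψ ∧ (∀ x, 0 < ψ x) ∧
      ∃ h₀ > (0 : ℝ), ∃ θ₀ ∈ Set.Ioc (0 : ℝ) 1, ∃ C > (0 : ℝ),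
        ∀ h : ℝ, 0 < h → h ≤ h₀ → ∀ θ : ℝ, 0 < θ → θ ≤ θ₀ →
          ∀ Eev ∈ Set.Icc (-E₀) E₀,
            ∀ u : E2 → ℂ, ContDiff ℝ (⊤ : ℕ∞) u → HasCompactSupport u →
              tsupport u ⊆ ball (0 : E2) R₀ →
              h * ∫ x in ball (0 : E2) R₀,
                  Real.exp (2 * ψ x * Real.sqrt (omegaV R₀ V θ) / (h * Real.sqrt θ)) *
                    (‖u x‖ ^ 2 + (θ / omegaV R₀ V θ) * (h ^ 2 * gradSq u x)) ≤
                C * (θ / omegaV R₀ V θ) ^ ((3 : ℝ) / 2) *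
                  ∫ x in ball (0 : E2) R₀,
                    Real.exp (2 * ψ x * Real.sqrt (omegaV R₀ V θ) / (h * Real.sqrt θ)) *
                      ‖schrod h (Vreg V φ θ) Eev u x‖ ^ 2 := by
  obtain ⟨ψ, hψ, hψpos, hest⟩ := stmt9_general (G := ℂ) (EuclideanSpace.basisFun (Fin 2) ℝ)
    (isBounded_ball (x := (0 : E2)) (r := R₀))
    (locallyIntegrable_of_measurable_of_bounded hVmeas hVbdd)
    (hφsmooth.of_le (mod_cast le_top)) hφsupp
  refine ⟨ψ, hψ, hψpos, 1, one_pos, 1, ⟨one_pos, le_rfl⟩, 1, one_pos,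
    fun h hh _ θ hθ hθ₁ E _ u hu _ hsupp ↦ ?_⟩
  have hu₂ : ContDiff ℝ 2 u := mod_cast contDiff_infty.1 hu 2
  rw [one_mul, gradSq_eq_gradNormSq, schrod_eq_semiclassicalSchrodinger h _ E hu₂,
    Vreg_eq_convolution]
  exact hest h hh θ hθ _ (hω θ ⟨hθ, hθ₁⟩) (fun x hx t ht ↦ abs_sub_le_omegaV hVbdd hx ht) E u hu₂
    hsupp
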